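/- Group envy-freeness implies envy-freeness under homogeneity (Proposition 2): let ε, ε̃ > 0, let G be a partition of the users {1,…,M} into disjoint groups, and assume that any two users m, n in the same group g satisfy q^m = q^n, sup_{x∈X} ∑_{a∈A} |π^m(a|x) − π^n(a|x)| ≤ ε̃, and sup_{x∈X} ∑_{a∈A} |ρ^m(a|x) − ρ^n(a|x)| ≤ ε̃. If the system is ε-group-envy-free, i.e. U(g,g') ≤ U(g,g) + ε for all groups g, g' ∈ G, then it is (ε + 4ε̃)-envy-free: u^m(π^n) ≤ u^m(π^m) + ε + 4ε̃ for all users m, n. -/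

import Mathlib

open Finset

/-! Utility is linear in the policy, so a group utility is a double average of the pairwise
utilities `u^m(π^n)`. If policies within a group are `δ`-close in `L¹` and rewards `η`-close in sup
distance, moving `m` and `n` within their groups changes `u^m(π^n)` by at most `δ / 2 + η`. Hence
every pairwise utility is that close to the corresponding group utility, and envy-freeness follows
from two such comparisons, for `(m, n)` and for `(m, m)`. -/

section Expectation

variable {α : Type*} [Fintype α]

theorem sum_mul_le_sum_mul_add_of_mem_stdSimplex {p f g : α → ℝ} {c : ℝ}
    (hp : p ∈ stdSimplex ℝ α) (hfg : ∀ a, f a ≤ g a + c) :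
    ∑ a, p a * f a ≤ ∑ a, p a * g a + c :=
  calc
    ∑ a, p a * f a ≤ ∑ a, p a * (g a + c) :=
      sum_le_sum fun a _ => mul_le_mul_of_nonneg_left (hfg a) (hp.1 a)
    _ = ∑ a, p a * g a + c := by
      simp only [mul_add, sum_add_distrib, ← sum_mul, hp.2, one_mul]

theorem sum_mul_le_sum_mul_add_half_sum_abs_sub {p p' r : α → ℝ}
    (hpp' : ∑ a, p a = ∑ a, p' a) (hr : ∀ a, r a ∈ Set.Icc (0 : ℝ) 1) :
    ∑ a, p a * r a ≤ ∑ a, p' a * r a + (∑ a, |p a - p' a|) / 2 := by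
  -- Since `p` and `p'` have equal mass, `r` may be recentred to take values in `[-1/2, 1/2]`.
  have recentre : ∑ a, p a * r a - ∑ a, p' a * r a = ∑ a, (p a - p' a) * (r a - 1 / 2) := by
    simp only [sub_mul, mul_sub, sum_sub_distrib, ← sum_mul, hpp']
    ring
  have bound : ∑ a, (p a - p' a) * (r a - 1 / 2) ≤ ∑ a, |p a - p' a| * (1 / 2) := by
    refine sum_le_sum fun a _ => (le_abs_self _).trans ?_
    rw [abs_mul]
    have hra : |r a - 1 / 2| ≤ 1 / 2 := abs_le.2 ⟨by linarith [(hr a).1], by linarith [(hr a).2]⟩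
    gcongr
  rw [← sum_mul] at bound
  linarith

end Expectation

section Homogeneity

variable {ι X A : Type*} [Fintype A]

/-- Homogeneity of a group of users: equal context distributions, policies within `δ` in `L¹`
distance and rewards within `η` in sup distance, uniformly in the context. -/
structure IsHomogeneousGroup (q : ι → X → ℝ) (ρ π : ι → X → A → ℝ) (δ η : ℝ)
    (g : Finset ι) : Prop where
  context_eq : ∀ m ∈ g, ∀ n ∈ g, q m = q n
  sum_abs_policy_sub_le : ∀ m ∈ g, ∀ n ∈ g, ∀ x, ∑ a, |π m x a - π n x a| ≤ δ
  abs_reward_sub_le : ∀ m ∈ g, ∀ n ∈ g, ∀ x a, |ρ m x a - ρ n x a| ≤ η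

variable {q : ι → X → ℝ} {ρ π : ι → X → A → ℝ} {δ η : ℝ} {g : Finset ι}

theorem IsHomogeneousGroup.of_sum_abs_sub_le (hq : ∀ m ∈ g, ∀ n ∈ g, q m = q n)
    (hπ : ∀ m ∈ g, ∀ n ∈ g, ∀ x, ∑ a, |π m x a - π n x a| ≤ δ)
    (hρ : ∀ m ∈ g, ∀ n ∈ g, ∀ x, ∑ a, |ρ m x a - ρ n x a| ≤ η) :
    IsHomogeneousGroup q ρ π δ η g where
  context_eq := hq
  sum_abs_policy_sub_le := hπ
  abs_reward_sub_le m hm n hn x a :=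
    (single_le_sum (fun b _ => abs_nonneg (ρ m x b - ρ n x b)) (mem_univ a)).trans
      (hρ m hm n hn x)

end Homogeneity

section Utility

open scoped BigOperators

variable {ι κ X A : Type*} [Fintype X] [Fintype A]

/-- The utility `u(p)` of the policy `p` for a user with context distribution `q` and expected
rewards `ρ`; `p x a` and `ρ x a` encode `p(a|x)` and `ρ(a|x)`. -/
def policyUtility (q : X → ℝ) (ρ p : X → A → ℝ) : ℝ :=
  ∑ x, ∑ a, q x * p x a * ρ x a

/-- The group utility `U(g, g')`: the mean utility, over the users in `g`, of the average policy of
`g'`. -/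
noncomputable def groupUtility (q : ι → X → ℝ) (ρ π : ι → X → A → ℝ) (g g' : Finset ι) : ℝ :=
  𝔼 m ∈ g, policyUtility (q m) (ρ m) (𝔼 n ∈ g', π n)

theorem policyUtility_eq_sum_mul_sum (q : X → ℝ) (ρ p : X → A → ℝ) :
    policyUtility q ρ p = ∑ x, q x * ∑ a, p x a * ρ x a := by
  simp only [policyUtility, mul_sum, mul_assoc]

theorem policyUtility_expect (q : X → ℝ) (ρ : X → A → ℝ) (π : ι → X → A → ℝ) (s : Finset ι) :
    policyUtility q ρ (𝔼 n ∈ s, π n) = 𝔼 n ∈ s, policyUtility q ρ (π n) := by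
  simp only [policyUtility, expect_apply, mul_expect, expect_mul, expect_sum_comm]

theorem policyUtility_le_of_sum_abs_sub_le {q : X → ℝ} {ρ ρ' p p' : X → A → ℝ} {δ η : ℝ}
    (hq : q ∈ stdSimplex ℝ X) (hp : ∀ x, ∑ a, p x a = 1) (hp' : ∀ x, p' x ∈ stdSimplex ℝ A)
    (hρ : ∀ x a, ρ x a ∈ Set.Icc (0 : ℝ) 1) (hpp' : ∀ x, ∑ a, |p x a - p' x a| ≤ δ)
    (hρρ' : ∀ x a, ρ x a ≤ ρ' x a + η) :
    policyUtility q ρ p ≤ policyUtility q ρ' p' + (δ / 2 + η) := by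
  simp only [policyUtility_eq_sum_mul_sum]
  refine sum_mul_le_sum_mul_add_of_mem_stdSimplex hq fun x => ?_
  have change_policy : ∑ a, p x a * ρ x a ≤ ∑ a, p' x a * ρ x a + (∑ a, |p x a - p' x a|) / 2 :=
    sum_mul_le_sum_mul_add_half_sum_abs_sub ((hp x).trans (hp' x).2.symm) (hρ x)
  have change_reward : ∑ a, p' x a * ρ x a ≤ ∑ a, p' x a * ρ' x a + η :=
    sum_mul_le_sum_mul_add_of_mem_stdSimplex (hp' x) (hρρ' x)
  linarith [hpp' x]

theorem groupUtility_eq_expect_expect (q : ι → X → ℝ) (ρ π : ι → X → A → ℝ) (g g' : Finset ι) :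
    groupUtility q ρ π g g' = 𝔼 m ∈ g, 𝔼 n ∈ g', policyUtility (q m) (ρ m) (π n) := by
  simp only [groupUtility, policyUtility_expect]

section Homogeneous

variable {q : ι → X → ℝ} {ρ π : ι → X → A → ℝ} {δ η : ℝ} {g g' : Finset ι} {m m' n n' : ι}

theorem IsHomogeneousGroup.policyUtility_le_policyUtility_add (hg : IsHomogeneousGroup q ρ π δ η g)
    (hg' : IsHomogeneousGroup q ρ π δ η g') (hq : ∀ m, q m ∈ stdSimplex ℝ X)
    (hπ : ∀ m x, π m x ∈ stdSimplex ℝ A) (hρ : ∀ m x a, ρ m x a ∈ Set.Icc (0 : ℝ) 1)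
    (hm : m ∈ g) (hm' : m' ∈ g) (hn : n ∈ g') (hn' : n' ∈ g') :
    policyUtility (q m) (ρ m) (π n) ≤ policyUtility (q m') (ρ m') (π n') + (δ / 2 + η) := by
  rw [hg.context_eq m hm m' hm']
  refine policyUtility_le_of_sum_abs_sub_le (hq m') (fun x => (hπ n x).2) (hπ n') (hρ m)
    (hg'.sum_abs_policy_sub_le n hn n' hn') fun x a => ?_
  linarith [le_of_abs_le (hg.abs_reward_sub_le m hm m' hm' x a)]

theorem IsHomogeneousGroup.policyUtility_le_groupUtility_add
    (hg : IsHomogeneousGroup q ρ π δ η g) (hg' : IsHomogeneousGroup q ρ π δ η g')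
    (hq : ∀ m, q m ∈ stdSimplex ℝ X)
    (hπ : ∀ m x, π m x ∈ stdSimplex ℝ A) (hρ : ∀ m x a, ρ m x a ∈ Set.Icc (0 : ℝ) 1)
    (hm : m ∈ g) (hn : n ∈ g') :
    policyUtility (q m) (ρ m) (π n) ≤ groupUtility q ρ π g g' + (δ / 2 + η) := by
  rw [groupUtility_eq_expect_expect, ← sub_le_iff_le_add]
  refine le_expect ⟨m, hm⟩ fun m' hm' => le_expect ⟨n, hn⟩ fun n' hn' => ?_
  exact sub_le_iff_le_add.2 (hg.policyUtility_le_policyUtility_add hg' hq hπ hρ hm hm' hn hn')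

theorem IsHomogeneousGroup.groupUtility_le_policyUtility_add
    (hg : IsHomogeneousGroup q ρ π δ η g) (hg' : IsHomogeneousGroup q ρ π δ η g')
    (hq : ∀ m, q m ∈ stdSimplex ℝ X)
    (hπ : ∀ m x, π m x ∈ stdSimplex ℝ A) (hρ : ∀ m x a, ρ m x a ∈ Set.Icc (0 : ℝ) 1)
    (hm : m ∈ g) (hn : n ∈ g') :
    groupUtility q ρ π g g' ≤ policyUtility (q m) (ρ m) (π n) + (δ / 2 + η) := by
  rw [groupUtility_eq_expect_expect]
  exact expect_le ⟨m, hm⟩ fun m' hm' => expect_le ⟨n, hn⟩ fun n' hn' =>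
    hg.policyUtility_le_policyUtility_add hg' hq hπ hρ hm' hm hn' hn

end Homogeneous

theorem group_envy_free_implies_envy_free_general
    {q : ι → X → ℝ} {ρ π : ι → X → A → ℝ} {ε δ η : ℝ} {group : κ → Finset ι}
    (hq : ∀ m, q m ∈ stdSimplex ℝ X) (hπ : ∀ m x, π m x ∈ stdSimplex ℝ A)
    (hρ : ∀ m x a, ρ m x a ∈ Set.Icc (0 : ℝ) 1)
    (hcover : ∀ m, ∃ k, m ∈ group k)
    (hhom : ∀ k, IsHomogeneousGroup q ρ π δ η (group k))
    (hGEF : ∀ k l, groupUtility q ρ π (group k) (group l) ≤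
      groupUtility q ρ π (group k) (group k) + ε) (m n : ι) :
    policyUtility (q m) (ρ m) (π n) ≤ policyUtility (q m) (ρ m) (π m) + ε + δ + 2 * η := by
  obtain ⟨k, hm⟩ := hcover m
  obtain ⟨l, hn⟩ := hcover n
  have lower := (hhom k).policyUtility_le_groupUtility_add (hhom l) hq hπ hρ hm hn
  have upper := (hhom k).groupUtility_le_policyUtility_add (hhom k) hq hπ hρ hm hm
  linarith [hGEF k l]

end Utility

/-- Group envy-freeness implies envy-freeness under homogeneity (Proposition 2):
users are partitioned into `G` groups via `grp : Fin M → Fin G` (each group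
nonempty); any two users of the same group have the same context distribution,
policies within `ε̃` of each other in `L¹` distance for every context, and rewards
within `ε̃` of each other in `L¹` distance for every context.  The group utility is
`U g g' = (1/|g|) ∑_{m ∈ g} u m (average policy of g')`.  If the system is
`ε`-group-envy-free, then it is `(ε + 4ε̃)`-envy-free. -/
theorem group_envy_free_implies_envy_free
    {M G : ℕ} {X A : Type*} [Fintype X] [Fintype A]
    (q : Fin M → X → ℝ) (π : Fin M → X → A → ℝ) (ρ : Fin M → X → A → ℝ)
    (u : Fin M → (X → A → ℝ) → ℝ)
    (hu : ∀ m p, u m p = ∑ x, ∑ a, q m x * p x a * ρ m x a)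
    (hq_nonneg : ∀ m x, 0 ≤ q m x) (hq_sum : ∀ m, ∑ x, q m x = 1)
    (hπ_nonneg : ∀ m x a, 0 ≤ π m x a) (hπ_sum : ∀ m x, ∑ a, π m x a = 1)
    (hρ : ∀ m x a, ρ m x a ∈ Set.Icc (0 : ℝ) 1)
    (ε εt : ℝ) (hε : 0 < ε) (hεt : 0 < εt)
    (grp : Fin M → Fin G)
    (grpSet : Fin G → Finset (Fin M))
    (hgrpSet : ∀ g, grpSet g = Finset.univ.filter (fun m => grp m = g))
    (hne : ∀ g, (grpSet g).Nonempty)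
    (hq_hom : ∀ m n, grp m = grp n → q m = q n)
    (hπ_hom : ∀ m n, grp m = grp n → ∀ x, ∑ a, |π m x a - π n x a| ≤ εt)
    (hρ_hom : ∀ m n, grp m = grp n → ∀ x, ∑ a, |ρ m x a - ρ n x a| ≤ εt)
    (U : Fin G → Fin G → ℝ)
    (hU : ∀ g g', U g g' = (1 / ((grpSet g).card : ℝ)) * ∑ m ∈ grpSet g,
      u m (fun x a => (1 / ((grpSet g').card : ℝ)) * ∑ n ∈ grpSet g', π n x a))
    (hGEF : ∀ g g', U g g' ≤ U g g + ε) :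
    ∀ m n, u m (π n) ≤ u m (π m) + ε + 4 * εt := by
  have same_group {g m n} (hm : m ∈ grpSet g) (hn : n ∈ grpSet g) : grp m = grp n := by
    rw [hgrpSet, mem_filter_univ] at hm hn
    exact hm.trans hn.symm
  have homogeneous (g) : IsHomogeneousGroup q ρ π εt εt (grpSet g) :=
    .of_sum_abs_sub_le (fun m hm n hn => hq_hom m n (same_group hm hn))
      (fun m hm n hn => hπ_hom m n (same_group hm hn))
      (fun m hm n hn => hρ_hom m n (same_group hm hn))
  have hU_eq (g g') : U g g' = groupUtility q ρ π (grpSet g) (grpSet g') := by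
    simp only [groupUtility, policyUtility, hU, hu, expect_apply, expect_eq_sum_div_card,
      one_div, inv_mul_eq_div]
  intro m n
  have envy_le := group_envy_free_implies_envy_free_general
    (fun m => ⟨hq_nonneg m, hq_sum m⟩) (fun m x => ⟨hπ_nonneg m x, hπ_sum m x⟩) hρ
    (fun m => ⟨grp m, by simp only [hgrpSet, mem_filter_univ]⟩) homogeneous
    (by simpa only [hU_eq] using hGEF) m n
  simp only [policyUtility, ← hu] at envy_le
  linarith
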